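/- Let d, r be natural numbers with 2 ≤ r ≤ d and let λ : Fin r → ℝ satisfy λ_k > 0 for all k and ∑_k λ_k = 1. Define the concurrence C(λ) = √((d/(d−1)) · (1 − ∑_k λ_k²)) and the negativity N(λ) = ((∑_k √(λ_k))² − 1)/2. Then C(λ) ≥ 2 · √(d/((d−1) · r · (r−1))) · N(λ). -/

import Mathlib

/-!
Because the weights sum to `1`, both `(∑ √l k)² - 1 = ∑_{k ≠ m} √(l k) √(l m)` and
`1 - ∑ (l k)² = ∑_{k ≠ m} l k * l m` are sums over the `r (r - 1)` ordered pairs `k ≠ m`, and the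
terms of the second are the squares of the terms of the first. Cauchy–Schwarz compares the two.
-/

open Finset

section OffDiag

variable {ι R : Type*}

lemma sum_offDiag_mul [NonUnitalNonAssocRing R] (s : Finset ι) (f g : ι → R) :
    ∑ p ∈ s.offDiag, f p.1 * g p.2 = (∑ i ∈ s, f i) * (∑ i ∈ s, g i) - ∑ i ∈ s, f i * g i := by
  classical
  rw [eq_sub_iff_add_eq', sum_mul_sum, ← sum_product', ← diag_union_offDiag,
    sum_union (disjoint_diag_offDiag s), sum_diag]

lemma cast_card_offDiag [NonAssocRing R] (s : Finset ι) :
    (#s.offDiag : R) = #s * (#s - 1) := by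
  simpa [mul_sub] using sum_offDiag_mul s (1 : ι → R) 1

lemma sq_sq_sum_sub_sum_sq_le [CommRing R] [LinearOrder R] [IsStrictOrderedRing R]
    (s : Finset ι) (f : ι → R) :
    ((∑ i ∈ s, f i) ^ 2 - ∑ i ∈ s, f i ^ 2) ^ 2
      ≤ #s * (#s - 1) * ((∑ i ∈ s, f i ^ 2) ^ 2 - ∑ i ∈ s, (f i ^ 2) ^ 2) := by
  calc ((∑ i ∈ s, f i) ^ 2 - ∑ i ∈ s, f i ^ 2) ^ 2
      = (∑ p ∈ s.offDiag, f p.1 * f p.2) ^ 2 := by simp only [sum_offDiag_mul, sq]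
    _ ≤ #s.offDiag * ∑ p ∈ s.offDiag, (f p.1 * f p.2) ^ 2 := sq_sum_le_card_mul_sum_sq
    _ = #s * (#s - 1) * ((∑ i ∈ s, f i ^ 2) ^ 2 - ∑ i ∈ s, (f i ^ 2) ^ 2) := by
      simp only [mul_pow, cast_card_offDiag, sum_offDiag_mul s (f · ^ 2) (f · ^ 2), ← sq]

end OffDiag

lemma sq_sum_sqrt_sub_sum_le {ι : Type*} (s : Finset ι) {l : ι → ℝ} (hl : ∀ i ∈ s, 0 ≤ l i) :
    (∑ i ∈ s, √(l i)) ^ 2 - ∑ i ∈ s, l i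
      ≤ √(#s * (#s - 1) * ((∑ i ∈ s, l i) ^ 2 - ∑ i ∈ s, l i ^ 2)) := by
  have hsq : ∀ i ∈ s, √(l i) ^ 2 = l i := fun i hi ↦ Real.sq_sqrt (hl i hi)
  have hsq_sq : ∀ i ∈ s, (√(l i) ^ 2) ^ 2 = l i ^ 2 := fun i hi ↦ by rw [hsq i hi]
  apply Real.le_sqrt_of_sq_le
  simpa only [sum_congr rfl hsq, sum_congr rfl hsq_sq] using
    sq_sq_sum_sub_sum_sq_le s fun i ↦ √(l i)

theorem concurrence_ge_negativity_general {ι : Type*} {s : Finset ι} (hs : s.Nontrivial)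
    {d : ℝ} (hd : 1 < d) {l : ι → ℝ} (hl : ∀ k ∈ s, 0 ≤ l k) (hsum : ∑ k ∈ s, l k = 1) :
    √(d / (d - 1) * (1 - ∑ k ∈ s, l k ^ 2))
      ≥ 2 * √(d / ((d - 1) * #s * (#s - 1))) * (((∑ k ∈ s, √(l k)) ^ 2 - 1) / 2) := by
  have hd_sub : 0 < d - 1 := sub_pos.2 hd
  have hcard_sub : (0 : ℝ) < #s - 1 := sub_pos.2 (mod_cast one_lt_card_iff_nontrivial.2 hs)
  have hcard : (0 : ℝ) < #s := by linarith
  have hcs : (∑ k ∈ s, √(l k)) ^ 2 - 1 ≤ √(#s * (#s - 1) * (1 - ∑ k ∈ s, l k ^ 2)) := by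
    simpa only [hsum, one_pow] using sq_sum_sqrt_sub_sum_le s hl
  calc 2 * √(d / ((d - 1) * #s * (#s - 1))) * (((∑ k ∈ s, √(l k)) ^ 2 - 1) / 2)
      = √(d / ((d - 1) * #s * (#s - 1))) * ((∑ k ∈ s, √(l k)) ^ 2 - 1) := by ring
    _ ≤ √(d / ((d - 1) * #s * (#s - 1))) * √(#s * (#s - 1) * (1 - ∑ k ∈ s, l k ^ 2)) := by gcongr
    _ = √(d / (d - 1) * (1 - ∑ k ∈ s, l k ^ 2)) := by
      rw [← Real.sqrt_mul (by positivity)]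
      congr 1
      field_simp

theorem concurrence_ge_negativity (d r : ℕ) (hr : 2 ≤ r) (hrd : r ≤ d)
    (l : Fin r → ℝ) (hpos : ∀ k, 0 < l k) (hsum : ∑ k, l k = 1) :
    Real.sqrt (((d : ℝ) / ((d : ℝ) - 1)) * (1 - ∑ k, (l k) ^ 2))
      ≥ 2 * Real.sqrt ((d : ℝ) / (((d : ℝ) - 1) * (r : ℝ) * ((r : ℝ) - 1)))
          * (((∑ k, Real.sqrt (l k)) ^ 2 - 1) / 2) := by
  have hcard : 1 < #(univ : Finset (Fin r)) := by rwa [card_fin]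
  simpa only [card_fin] using concurrence_ge_negativity_general
    (one_lt_card_iff_nontrivial.1 hcard) (mod_cast hr.trans hrd) (fun k _ ↦ (hpos k).le) hsum
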